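/- For every tournament T of order n ≥ 3, n/(2·log₂((2n+2)/3)) ≤ dac(T) ≤ ⌈n/2⌉. -/

import Mathlib

/-!
In a set `S` of vertices, call `C ⊆ S` dominating (absorbing) if every vertex of `S` outside `C`
has an in-neighbour (out-neighbour) in `C`. Peeling off acyclic sets that are dominating and
absorbing in what remains produces an acyclic complete coloring, so for the lower bound it
suffices that every nonempty `S` contains such a `C` of small size.

Picking a vertex with at least as many out-neighbours as in-neighbours and recursing into its
in-neighbourhood yields an acyclic dominating set `D` of any `U` with `2 ^ |D| ≤ |U| + 1`. Running
the same selection with arcs reversed on the common out-neighbours of a dominating set `D` extends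
`D` to an absorbing set, as every other vertex already has an out-neighbour in `D`.

To save the constant, begin `D` with a vertex `v` of maximum out-degree and an in-neighbour `w` of
`v` that beats at least half of the other in-neighbours. Let `x - 1` count the common
in-neighbours of `v` and `w`, and `y - 1` the common out-neighbours. Since `w` has no more
out-neighbours than `v`, `3x + y ≤ |S| + 1`, whence `2 ^ |C| ≤ 4xy ≤ (|S| + 1) ^ 2 / 3`. If `v`
has no in-neighbour then `D = {v}` gives `2 ^ |C| ≤ 2 |S|`. As `|S| ≤ n` and `n ≥ 2`, both bounds
are at most `((2n + 2) / 3) ^ 2`.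

For the upper bound, no two singleton classes are joined by arcs in both directions, so a complete
coloring has at most one singleton class.
-/

/-- The subset `S` of vertices induces an acyclic subdigraph of the digraph with
arc relation `A` (i.e. there is no directed cycle all of whose vertices lie in `S`). -/
def AcyclicSet {V : Type*} (A : V → V → Prop) (S : Set V) : Prop :=
  ∀ v : V, ¬ Relation.TransGen (fun x y => x ∈ S ∧ y ∈ S ∧ A x y) v v

/-- `c` is an acyclic vertex coloring of the digraph `A` with `k` colors:
`c` is surjective and every chromatic class induces an acyclic subdigraph. -/
def IsAcyclicColoring {V : Type*} (A : V → V → Prop) {k : ℕ} (c : V → Fin k) : Prop :=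
  Function.Surjective c ∧ ∀ i : Fin k, AcyclicSet A {v | c v = i}

/-- `c` is a complete vertex coloring of the digraph `A` with `k` colors:
`c` is surjective and for every ordered pair of distinct colors `(i, j)` there is
an arc `(u, v)` with `c u = i` and `c v = j`. -/
def IsCompleteColoring {V : Type*} (A : V → V → Prop) {k : ℕ} (c : V → Fin k) : Prop :=
  Function.Surjective c ∧
    ∀ i j : Fin k, i ≠ j → ∃ u v : V, A u v ∧ c u = i ∧ c v = j

/-- The diachromatic number: the largest `k` admitting a complete acyclic `k`-coloring. -/
noncomputable def dac {V : Type*} (A : V → V → Prop) : ℕ :=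
  sSup {k | ∃ c : V → Fin k, IsAcyclicColoring A c ∧ IsCompleteColoring A c}

/-- The dichromatic number: the smallest `k` admitting an acyclic `k`-coloring. -/
noncomputable def dc {V : Type*} (A : V → V → Prop) : ℕ :=
  sInf {k | ∃ c : V → Fin k, IsAcyclicColoring A c}

/-- The pseudoachromatic number: the largest `k` admitting a complete `k`-coloring. -/
noncomputable def psi {V : Type*} (A : V → V → Prop) : ℕ :=
  sSup {k | ∃ c : V → Fin k, IsCompleteColoring A c}

/-- `A` is a tournament: no loops, and for distinct vertices exactly one of the
two possible arcs is present. -/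
def IsTournament {V : Type*} (A : V → V → Prop) : Prop :=
  (∀ v : V, ¬ A v v) ∧ ∀ u v : V, u ≠ v → (A u v ↔ ¬ A v u)

section

open Finset Function

variable {V : Type*} {A : V → V → Prop}

namespace AcyclicSet

theorem swap {S : Set V} (hS : AcyclicSet A S) : AcyclicSet (Function.swap A) S := by
  refine fun v hv => hS v (Relation.transGen_swap.1 (Relation.TransGen.mono ?_ v v hv))
  exact fun x y ⟨hx, hy, hxy⟩ => ⟨hy, hx, hxy⟩

theorem union {S T : Set V} (hS : AcyclicSet A S) (hT : AcyclicSet A T)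
    (hTS : ∀ t ∈ T, ∀ s ∈ S, ¬ A t s) : AcyclicSet A (S ∪ T) := by
  -- A walk that starts outside `S` never enters `S`, and a walk that ends in `S` never leaves it.
  have walk {x y : V}
      (h : Relation.TransGen (fun x y => x ∈ S ∪ T ∧ y ∈ S ∪ T ∧ A x y) x y) :
      (x ∉ S → y ∉ S ∧ Relation.TransGen (fun x y => x ∈ T ∧ y ∈ T ∧ A x y) x y) ∧
      (y ∈ S → Relation.TransGen (fun x y => x ∈ S ∧ y ∈ S ∧ A x y) x y) := by
    induction h with
    | single h =>
      refine ⟨fun hx => ?_, fun hy => ?_⟩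
      · have hxT := h.1.resolve_left hx
        have hyS := fun hy => hTS _ hxT _ hy h.2.2
        exact ⟨hyS, .single ⟨hxT, h.2.1.resolve_left hyS, h.2.2⟩⟩
      · have hxS := h.1.resolve_right fun hx => hTS _ hx _ hy h.2.2
        exact .single ⟨hxS, hy, h.2.2⟩
    | tail _ h ih =>
      refine ⟨fun hx => ?_, fun hz => ?_⟩
      · obtain ⟨hyS, hxy⟩ := ih.1 hx
        have hyT := h.1.resolve_left hyS
        have hzS := fun hz => hTS _ hyT _ hz h.2.2
        exact ⟨hzS, hxy.tail ⟨hyT, h.2.1.resolve_left hzS, h.2.2⟩⟩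
      · have hyS := h.1.resolve_right fun hy => hTS _ hy _ hz h.2.2
        exact (ih.2 hyS).tail ⟨hyS, hz, h.2.2⟩
  intro v hv
  by_cases hvS : v ∈ S
  · exact hS v ((walk hv).2 hvS)
  · exact hT v ((walk hv).1 hvS).2

end AcyclicSet

theorem acyclicSet_empty : AcyclicSet A ∅ := by
  intro v hv
  obtain ⟨_, h, _⟩ := Relation.TransGen.head'_iff.1 hv
  exact h.1

theorem acyclicSet_singleton {v : V} (hv : ¬ A v v) : AcyclicSet A {v} := by
  intro u hu
  obtain ⟨w, ⟨rfl, rfl, h⟩, _⟩ := Relation.TransGen.head'_iff.1 hu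
  exact hv h

/-- `D` is a dominating set of the subdigraph of `A` induced by `S`: every vertex of `S` outside `D`
has an in-neighbour in `D`. The absorbing sets of `A` are the dominating sets of `swap A`. -/
def IsDominatingIn (A : V → V → Prop) (D S : Finset V) : Prop :=
  D ⊆ S ∧ ∀ u ∈ S, u ∉ D → ∃ d ∈ D, A d u

theorem IsDominatingIn.nonempty {D S : Finset V} (hD : IsDominatingIn A D S) (hS : S.Nonempty) :
    D.Nonempty := by
  obtain ⟨u, hu⟩ := hS
  by_cases huD : u ∈ D
  · exact ⟨u, huD⟩
  · obtain ⟨d, hd, _⟩ := hD.2 u hu huD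
    exact ⟨d, hd⟩

theorem exists_card_in_le_card_out [DecidableRel A] {U : Finset V} (hU : U.Nonempty) :
    ∃ w ∈ U, #{u ∈ U | A u w} ≤ #{u ∈ U | A w u} :=
  exists_le_of_sum_le hU (sum_card_bipartiteAbove_eq_sum_card_bipartiteBelow A).ge

namespace IsTournament

theorem swap (hT : IsTournament A) : IsTournament (Function.swap A) :=
  ⟨hT.1, fun u v huv => hT.2 v u huv.symm⟩

theorem asymm (hT : IsTournament A) {u v : V} (huv : A u v) : ¬ A v u :=
  (hT.2 u v fun h => hT.1 v (h ▸ huv)).1 huv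

theorem arc_of_not_arc (hT : IsTournament A) {u v : V} (hne : u ≠ v) (h : ¬ A u v) : A v u :=
  (hT.2 v u hne.symm).2 h

theorem card_in_add_card_out [DecidableRel A] (hT : IsTournament A) {S : Finset V} {v : V}
    (hv : v ∈ S) : #{u ∈ S | A u v} + #{u ∈ S | A v u} + 1 = #S := by
  classical
  have hdisj : Disjoint {u ∈ S | A u v} {u ∈ S | A v u} :=
    disjoint_filter.2 fun u _ => hT.asymm
  have herase : S.erase v = {u ∈ S | A u v} ∪ {u ∈ S | A v u} := by
    ext u
    simp only [mem_erase, mem_union, mem_filter]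
    grind [hT.1 v, hT.2 u v]
  rw [← card_union_of_disjoint hdisj, ← herase, card_erase_add_one hv]

theorem acyclicSet_union [DecidableEq V] (hT : IsTournament A) {C D : Finset V}
    (hC : AcyclicSet A C) (hD : AcyclicSet A D) (hCD : ∀ c ∈ C, ∀ d ∈ D, A c d) :
    AcyclicSet A ↑(C ∪ D) := by
  rw [coe_union]
  exact hC.union hD fun d hd c hc => hT.asymm (hCD c hc d hd)

theorem acyclicSet_insert [DecidableEq V] (hT : IsTournament A) {D : Finset V} {w : V}
    (hD : AcyclicSet A D) (hDw : ∀ d ∈ D, A d w) : AcyclicSet A ↑(insert w D) := by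
  rw [insert_eq, union_comm]
  refine hT.acyclicSet_union hD ?_ (by simpa using hDw)
  simpa using acyclicSet_singleton (hT.1 w)

theorem isDominatingIn_insert [DecidableEq V] [DecidableRel A] (hT : IsTournament A)
    {D S : Finset V} {w : V} (hw : w ∈ S) (hD : IsDominatingIn A D {u ∈ S | A u w}) :
    IsDominatingIn A (insert w D) S := by
  refine ⟨insert_subset hw (hD.1.trans (filter_subset _ _)), fun u hu huD => ?_⟩
  rw [mem_insert, not_or] at huD
  by_cases huw : A u w
  · obtain ⟨d, hd, hdu⟩ := hD.2 u (mem_filter.2 ⟨hu, huw⟩) huD.2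
    exact ⟨d, mem_insert_of_mem hd, hdu⟩
  · exact ⟨w, mem_insert_self w D, hT.arc_of_not_arc huD.1 huw⟩

theorem exists_isDominatingIn (hT : IsTournament A) (U : Finset V) :
    ∃ D, IsDominatingIn A D U ∧ AcyclicSet A D ∧ 2 ^ #D ≤ #U + 1 := by
  classical
  induction U using Finset.strongInduction with
  | H U ih =>
    rcases U.eq_empty_or_nonempty with rfl | hU
    · exact ⟨∅, ⟨Subset.rfl, by simp⟩, by simpa using acyclicSet_empty, by simp⟩
    obtain ⟨w, hwU, hw⟩ := exists_card_in_le_card_out (A := A) hU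
    obtain ⟨D, hD, hDac, hDcard⟩ := ih {u ∈ U | A u w} (filter_ssubset.2 ⟨w, hwU, hT.1 w⟩)
    have hDw : ∀ d ∈ D, A d w := fun d hd => (mem_filter.1 (hD.1 hd)).2
    refine ⟨insert w D, hT.isDominatingIn_insert hwU hD, hT.acyclicSet_insert hDac hDw, ?_⟩
    calc 2 ^ #(insert w D) ≤ 2 ^ (#D + 1) := by gcongr; exacts [one_le_two, card_insert_le w D]
      _ = 2 * 2 ^ #D := pow_succ' 2 #D
      _ ≤ 2 * (#{u ∈ U | A u w} + 1) := by gcongr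
      _ ≤ #U + 1 := by linarith [hT.card_in_add_card_out hwU]

theorem exists_isDominatingIn_and_swap_of_isDominatingIn [DecidableRel A] (hT : IsTournament A)
    {D S : Finset V} (hD : IsDominatingIn A D S) (hDac : AcyclicSet A D) :
    ∃ C, IsDominatingIn A C S ∧ IsDominatingIn (Function.swap A) C S ∧ AcyclicSet A C ∧
      2 ^ #C ≤ 2 ^ #D * (#{u ∈ S | ∀ d ∈ D, A d u} + 1) := by
  classical
  obtain ⟨E, hE, hEac, hEcard⟩ := hT.swap.exists_isDominatingIn {u ∈ S | ∀ d ∈ D, A d u}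
  have hsub : D ∪ E ⊆ S := union_subset hD.1 (hE.1.trans (filter_subset _ _))
  refine ⟨D ∪ E, ⟨hsub, fun u hu huDE => ?_⟩, ⟨hsub, fun u hu huDE => ?_⟩, ?_, ?_⟩
  · obtain ⟨d, hd, hdu⟩ := hD.2 u hu fun h => huDE (mem_union_left E h)
    exact ⟨d, mem_union_left E hd, hdu⟩
  · by_cases hDu : ∀ d ∈ D, A d u
    · obtain ⟨e, he, hue⟩ := hE.2 u (mem_filter.2 ⟨hu, hDu⟩) fun h => huDE (mem_union_right D h)
      exact ⟨e, mem_union_right D he, hue⟩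
    · push Not at hDu
      obtain ⟨d, hd, hdu⟩ := hDu
      have hne : d ≠ u := fun h => huDE (mem_union_left E (h ▸ hd))
      exact ⟨d, mem_union_left E hd, hT.arc_of_not_arc hne hdu⟩
  · exact hT.acyclicSet_union hDac hEac.swap fun d hd e he => (mem_filter.1 (hE.1 he)).2 d hd
  · calc 2 ^ #(D ∪ E) ≤ 2 ^ (#D + #E) := by gcongr; exacts [one_le_two, card_union_le D E]
      _ = 2 ^ #D * 2 ^ #E := pow_add 2 #D #E
      _ ≤ _ := by gcongr

theorem card_out_in_add_card_common_out_lt [DecidableRel A] (hT : IsTournament A) {S : Finset V}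
    {v w : V} (hv : v ∈ S) (hwv : A w v) :
    #{u ∈ S | A u v ∧ A w u} + #{u ∈ S | A v u ∧ A w u} < #{u ∈ S | A w u} := by
  classical
  have hdisj : Disjoint {u ∈ S | A u v ∧ A w u} {u ∈ S | A v u ∧ A w u} :=
    disjoint_filter.2 fun u _ huv hvu => hT.asymm huv.1 hvu.1
  rw [← card_union_of_disjoint hdisj, ← filter_or]
  refine card_lt_card ⟨monotone_filter_right S fun u _ hu => hu.elim And.right And.right, ?_⟩
  intro h
  have := (mem_filter.1 (h (mem_filter.2 ⟨hv, hwv⟩))).2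
  exact this.elim (hT.1 v ·.1) (hT.1 v ·.1)

theorem three_mul_card_in_add_card_common_out_le [DecidableRel A] (hT : IsTournament A)
    {S : Finset V} {v w : V} (hv : v ∈ S) (hmax : ∀ u ∈ S, #{x ∈ S | A u x} ≤ #{x ∈ S | A v x})
    (hw : w ∈ {u ∈ S | A u v})
    (hle : #{u ∈ S | A u v ∧ A u w} ≤ #{u ∈ S | A u v ∧ A w u}) :
    3 * (#{u ∈ S | A u v ∧ A u w} + 1) + (#{u ∈ S | A v u ∧ A w u} + 1) ≤ #S + 1 := by
  obtain ⟨hwS, hwv⟩ := mem_filter.1 hw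
  have hout := hT.card_out_in_add_card_common_out_lt hv hwv
  have hcardS := hT.card_in_add_card_out hv
  have hcardP := hT.card_in_add_card_out hw
  simp only [filter_filter] at hcardP
  have hvmax := hmax w hwS
  omega

theorem exists_isDominatingIn_mul_card_common_out_le_of_arc [DecidableRel A]
    (hT : IsTournament A) {S : Finset V} {v : V} (hv : v ∈ S)
    (hmax : ∀ u ∈ S, #{x ∈ S | A u x} ≤ #{x ∈ S | A v x}) (hin : ∃ u ∈ S, A u v) :
    ∃ D, IsDominatingIn A D S ∧ AcyclicSet A D ∧
      3 * (2 ^ #D * (#{u ∈ S | ∀ d ∈ D, A d u} + 1)) ≤ (#S + 1) ^ 2 := by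
  classical
  set P : Finset V := {u ∈ S | A u v} with hP
  have hPne : P.Nonempty := filter_nonempty_iff.2 hin
  obtain ⟨w, hwP, hw⟩ := exists_card_in_le_card_out (A := A) hPne
  obtain ⟨D, hD, hDac, hDcard⟩ := hT.exists_isDominatingIn {u ∈ P | A u w}
  have hDw : ∀ d ∈ D, A d w := fun d hd => (mem_filter.1 (hD.1 hd)).2
  have hwDP : IsDominatingIn A (insert w D) P := hT.isDominatingIn_insert hwP hD
  have hwDv : ∀ d ∈ insert w D, A d v := fun d hd => (mem_filter.1 (hwDP.1 hd)).2
  refine ⟨insert v (insert w D), hT.isDominatingIn_insert hv hwDP,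
    hT.acyclicSet_insert (hT.acyclicSet_insert hDac hDw) hwDv, ?_⟩
  set x := #{u ∈ P | A u w} + 1
  set y := #{u ∈ S | A v u ∧ A w u} + 1
  have hcard : #(insert v (insert w D)) ≤ #D + 2 :=
    (card_insert_le _ _).trans (Nat.succ_le_succ (card_insert_le _ _))
  have hcommon : #{u ∈ S | ∀ d ∈ insert v (insert w D), A d u} + 1 ≤ y := by
    refine Nat.succ_le_succ (card_le_card (monotone_filter_right S fun u _ hu => ?_))
    rw [forall_mem_insert, forall_mem_insert] at hu
    exact ⟨hu.1, hu.2.1⟩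
  have hxy : 3 * x + y ≤ #S + 1 := by
    simp only [hP, filter_filter] at hw
    simpa only [x, y, hP, filter_filter] using
      hT.three_mul_card_in_add_card_common_out_le hv hmax hwP hw
  calc 3 * (2 ^ #(insert v (insert w D)) * (_ + 1))
      ≤ 3 * (2 ^ (#D + 2) * y) := by gcongr; exact one_le_two
    _ = 12 * (2 ^ #D * y) := by ring
    _ ≤ 12 * (x * y) := by gcongr
    _ ≤ (3 * x + y) ^ 2 := by linarith [four_mul_le_sq_add (3 * x) y]
    _ ≤ (#S + 1) ^ 2 := by gcongr

theorem exists_isDominatingIn_mul_card_common_out_le [DecidableRel A] (hT : IsTournament A)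
    {S : Finset V} (hS : S.Nonempty) :
    ∃ D, IsDominatingIn A D S ∧ AcyclicSet A D ∧
      9 * (2 ^ #D * (#{u ∈ S | ∀ d ∈ D, A d u} + 1)) ≤ 4 * (max #S 2 + 1) ^ 2 := by
  classical
  obtain ⟨v, hv, hmax⟩ := exists_max_image S (fun u => #{x ∈ S | A u x}) hS
  by_cases hin : ∃ u ∈ S, A u v
  · obtain ⟨D, hD, hDac, hDcard⟩ :=
      hT.exists_isDominatingIn_mul_card_common_out_le_of_arc hv hmax hin
    refine ⟨D, hD, hDac, ?_⟩
    have : (#S + 1) ^ 2 ≤ (max #S 2 + 1) ^ 2 := by gcongr; exact le_max_left _ _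
    linarith [Nat.zero_le ((max #S 2 + 1) ^ 2)]
  · have hP : {u ∈ S | A u v} = ∅ := filter_eq_empty_iff.2 fun u hu huv => hin ⟨u, hu, huv⟩
    have hvS : IsDominatingIn A {v} S :=
      hT.isDominatingIn_insert hv ⟨empty_subset _, by simp [hP]⟩
    refine ⟨{v}, hvS, by simpa using acyclicSet_singleton (hT.1 v), ?_⟩
    have hcard := hT.card_in_add_card_out hv
    rw [hP, card_empty, zero_add] at hcard
    simp only [mem_singleton, forall_eq, hcard, card_singleton, pow_one]
    nlinarith [le_max_left #S 2, le_max_right #S 2]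

theorem exists_acyclicSet_isDominatingIn_and_swap (hT : IsTournament A) {S : Finset V}
    (hS : S.Nonempty) :
    ∃ C, IsDominatingIn A C S ∧ IsDominatingIn (Function.swap A) C S ∧ AcyclicSet A C ∧
      9 * 2 ^ #C ≤ 4 * (max #S 2 + 1) ^ 2 := by
  classical
  obtain ⟨D, hD, hDac, hDcard⟩ := hT.exists_isDominatingIn_mul_card_common_out_le hS
  obtain ⟨C, hC, hC', hCac, hCcard⟩ :=
    hT.exists_isDominatingIn_and_swap_of_isDominatingIn hD hDac
  exact ⟨C, hC, hC', hCac, (Nat.mul_le_mul_left 9 hCcard).trans hDcard⟩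

end IsTournament

theorem exists_finpartition_pairwise_exists_arc [DecidableEq V] {p : Finset V → Prop}
    (h : ∀ S : Finset V, S.Nonempty →
      ∃ C, IsDominatingIn A C S ∧ IsDominatingIn (swap A) C S ∧ p C) (S : Finset V) :
    ∃ P : Finpartition S, (∀ C ∈ P.parts, p C) ∧
      (P.parts : Set (Finset V)).Pairwise fun C D => ∃ u ∈ C, ∃ v ∈ D, A u v := by
  induction S using Finset.strongInduction with
  | H S ih =>
    rcases S.eq_empty_or_nonempty with rfl | hS
    · exact ⟨Finpartition.empty _, by simp, by simp⟩
    obtain ⟨C, hC, hC', hpC⟩ := h S hS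
    have hCne := hC.nonempty hS
    obtain ⟨P, hpP, hP⟩ := ih (S \ C) (sdiff_ssubset hC.1 hCne)
    refine ⟨P.extend hCne.ne_empty sdiff_disjoint (sdiff_union_of_subset hC.1), ?_, ?_⟩
    · exact (forall_mem_insert _ _ _).2 ⟨hpC, hpP⟩
    rw [Finpartition.extend, coe_insert, Set.pairwise_insert]
    refine ⟨hP, fun D hD _ => ?_⟩
    obtain ⟨v, hvD⟩ := P.nonempty_of_mem_parts hD
    obtain ⟨hvS, hvC⟩ := mem_sdiff.1 (P.le hD hvD)
    obtain ⟨u, huC, huv⟩ := hC.2 v hvS hvC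
    obtain ⟨w, hwC, hvw⟩ := hC'.2 v hvS hvC
    exact ⟨⟨u, huC, v, hvD, huv⟩, ⟨v, hvD, w, hwC, hvw⟩⟩

theorem le_dac [Finite V] {k : ℕ} {c : V → Fin k} (hac : IsAcyclicColoring A c)
    (hcomp : IsCompleteColoring A c) : k ≤ dac A := by
  refine le_csSup ⟨Nat.card V, ?_⟩ ⟨c, hac, hcomp⟩
  rintro l ⟨d, hd, _⟩
  simpa using Nat.card_le_card_of_surjective d hd.1

variable [Fintype V]

theorem card_parts_le_dac [DecidableEq V] (P : Finpartition (univ : Finset V))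
    (hac : ∀ C ∈ P.parts, AcyclicSet A C)
    (hP : (P.parts : Set (Finset V)).Pairwise fun C D => ∃ u ∈ C, ∃ v ∈ D, A u v) :
    #P.parts ≤ dac A := by
  let c : V → Fin #P.parts := fun v => P.parts.equivFin ⟨P.part v, P.part_mem.2 (mem_univ v)⟩
  have c_eq_iff (v : V) (i : Fin #P.parts) : c v = i ↔ v ∈ (P.parts.equivFin.symm i).1 := by
    rw [← P.part_eq_iff_mem (P.parts.equivFin.symm i).2, ← Equiv.eq_symm_apply, Subtype.ext_iff]
  have hsurj : Surjective c := fun i => by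
    obtain ⟨v, hv⟩ := P.nonempty_of_mem_parts (P.parts.equivFin.symm i).2
    exact ⟨v, (c_eq_iff v i).2 hv⟩
  refine le_dac (c := c) ⟨hsurj, fun i => ?_⟩ ⟨hsurj, fun i j hij => ?_⟩
  · simp only [c_eq_iff]
    exact hac _ (P.parts.equivFin.symm i).2
  · have hne : (P.parts.equivFin.symm i).1 ≠ (P.parts.equivFin.symm j).1 :=
      fun h => hij (P.parts.equivFin.symm.injective (Subtype.ext h))
    obtain ⟨u, hu, v, hv, huv⟩ :=
      hP (P.parts.equivFin.symm i).2 (P.parts.equivFin.symm j).2 hne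
    exact ⟨u, v, huv, (c_eq_iff u i).2 hu, (c_eq_iff v j).2 hv⟩

theorem natCast_le_two_mul_logb {c n : ℕ} (h : 9 * 2 ^ c ≤ 4 * (n + 1) ^ 2) :
    (c : ℝ) ≤ 2 * Real.logb 2 ((2 * (n : ℝ) + 2) / 3) := by
  have h' : (9 : ℝ) * 2 ^ c ≤ 4 * ((n : ℝ) + 1) ^ 2 := by exact_mod_cast h
  have hpow : (2 : ℝ) ^ c ≤ ((2 * (n : ℝ) + 2) / 3) ^ 2 := by linarith
  calc (c : ℝ) = Real.logb 2 (2 ^ c) := by simp [Real.logb_pow]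
    _ ≤ Real.logb 2 (((2 * (n : ℝ) + 2) / 3) ^ 2) :=
      Real.logb_le_logb_of_le one_lt_two (by positivity) hpow
    _ = 2 * Real.logb 2 ((2 * (n : ℝ) + 2) / 3) := by simp [Real.logb_pow]

theorem IsTournament.div_logb_le_dac (hT : IsTournament A) (hn : 2 ≤ Fintype.card V) :
    (Fintype.card V : ℝ) / (2 * Real.logb 2 ((2 * (Fintype.card V : ℝ) + 2) / 3)) ≤ dac A := by
  classical
  set n := Fintype.card V
  set g : ℝ := 2 * Real.logb 2 ((2 * (n : ℝ) + 2) / 3)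
  have hclass (S : Finset V) (hS : S.Nonempty) : ∃ C, IsDominatingIn A C S ∧
      IsDominatingIn (Function.swap A) C S ∧ AcyclicSet A C ∧ (#C : ℝ) ≤ g := by
    obtain ⟨C, hC, hC', hCac, hCcard⟩ := hT.exists_acyclicSet_isDominatingIn_and_swap hS
    refine ⟨C, hC, hC', hCac, natCast_le_two_mul_logb (hCcard.trans ?_)⟩
    gcongr
    exact max_le S.card_le_univ hn
  obtain ⟨P, hparts, hP⟩ := exists_finpartition_pairwise_exists_arc hclass univ
  have hn2 : (2 : ℝ) ≤ n := by exact_mod_cast hn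
  have hg : 0 ≤ g := mul_nonneg zero_le_two (Real.logb_nonneg one_lt_two (by linarith))
  refine div_le_of_le_mul₀ hg (Nat.cast_nonneg _) ?_
  calc (n : ℝ) = ∑ C ∈ P.parts, (#C : ℝ) := by
        rw [← Nat.cast_sum, P.sum_card_parts, card_univ]
    _ ≤ #P.parts * g := by
      simpa using sum_le_card_nsmul P.parts (fun C => (#C : ℝ)) g fun C hC => (hparts C hC).2
    _ ≤ dac A * g := by
      gcongr
      exact card_parts_le_dac P (fun C hC => (hparts C hC).1) hP

theorem IsCompleteColoring.le_half_card_add_one (hA : ∀ u v, A u v → ¬ A v u) {k : ℕ}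
    {c : V → Fin k} (hc : IsCompleteColoring A c) : k ≤ (Fintype.card V + 1) / 2 := by
  classical
  have hsingle : #{i | #{v | c v = i} ≤ 1} ≤ 1 := by
    refine card_le_one.2 fun i hi j hj => by_contra fun hij => ?_
    rw [mem_filter_univ, card_le_one] at hi hj
    obtain ⟨u, v, huv, hu, hv⟩ := hc.2 i j hij
    obtain ⟨v', u', hvu', hv', hu'⟩ := hc.2 j i (Ne.symm hij)
    obtain rfl : u = u' := hi u (by simp [hu]) u' (by simp [hu'])
    obtain rfl : v = v' := hj v (by simp [hv]) v' (by simp [hv'])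
    exact hA u v huv hvu'
  have htwo (i : Fin k) : 2 ≤ #{v | c v = i} + if #{v | c v = i} ≤ 1 then 1 else 0 := by
    obtain ⟨v, hv⟩ := hc.1 i
    have : 0 < #{v | c v = i} := card_pos.2 ⟨v, by simp [hv]⟩
    split_ifs <;> omega
  have : 2 * k ≤ Fintype.card V + 1 :=
    calc 2 * k = ∑ _i : Fin k, 2 := by simp [mul_comm]
      _ ≤ ∑ i : Fin k, (#{v | c v = i} + if #{v | c v = i} ≤ 1 then 1 else 0) :=
        sum_le_sum fun i _ => htwo i
      _ = Fintype.card V + #{i | #{v | c v = i} ≤ 1} := by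
        rw [sum_add_distrib, ← card_filter, ← card_eq_sum_card_fiberwise (by simp), card_univ]
      _ ≤ Fintype.card V + 1 := by gcongr
  omega

theorem dac_le_half_card_add_one (hA : ∀ u v, A u v → ¬ A v u) :
    dac A ≤ (Fintype.card V + 1) / 2 :=
  csSup_le' fun _ ⟨_, _, hc⟩ => hc.le_half_card_add_one hA

end

/-- For every tournament `T` of order `n ≥ 3`,
`n / (2·log₂((2n+2)/3)) ≤ dac(T) ≤ ⌈n/2⌉`. -/
theorem stmt9 {V : Type*} [Fintype V] (A : V → V → Prop)
    (hT : IsTournament A) (hn : 3 ≤ Fintype.card V) :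
    (Fintype.card V : ℝ) /
        (2 * Real.logb 2 ((2 * (Fintype.card V : ℝ) + 2) / 3)) ≤ dac A ∧
      dac A ≤ (Fintype.card V + 1) / 2 :=
  ⟨hT.div_logb_le_dac (by omega), dac_le_half_card_add_one fun _ _ => hT.asymm⟩
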